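/- Let G be a modular noetherian right ℓ-group with strong order unit s, s^{-1} = ⋀X(G⁻), and let 𝒞(G⁻) = Cent([s^{-1},e]) be the center of the strong order interval. If a, b ∈ 𝒞(G⁻) with b ≤ a, then b a^{-1} ∈ 𝒞(G⁻). Consequently 𝒞(G⁻) is closed under the arrow operation a → b = (a ∧ b)a^{-1}. -/

import Mathlib

universe u

/-- An element `s` of a right ℓ-group is normal if left multiplication by `s` preserves
the lattice operations. -/
def IsNormal {G : Type u} [Lattice G] [Group G] (s : G) : Prop :=
  ∀ x y : G, s * (x ⊓ y) = s * x ⊓ s * y ∧ s * (x ⊔ y) = s * x ⊔ s * y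

/-- A strong order unit: a normal element `s > 1` such that every `g` satisfies
`g ≤ sⁿ` for some integer `n`. -/
def IsStrongOrderUnit {G : Type u} [Lattice G] [Group G] (s : G) : Prop :=
  1 < s ∧ IsNormal s ∧ ∀ g : G, ∃ n : ℤ, g ≤ s ^ n

/-- A right ℓ-group is noetherian if every ascending chain bounded above and every
descending chain bounded below stabilizes. -/
def IsLatticeNoetherian (G : Type u) [Lattice G] : Prop :=
  (∀ f : ℕ → G, Monotone f → (∃ h : G, ∀ n, f n ≤ h) → ∃ N, ∀ m, N ≤ m → f m = f N) ∧
  (∀ f : ℕ → G, Antitone f → (∃ h : G, ∀ n, h ≤ f n) → ∃ N, ∀ m, N ≤ m → f m = f N)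

/-- An element `z` of a bounded lattice `L` is central if some lattice isomorphism
`L ≅ L₁ × L₂` sends `z` to `(⊥, ⊤)`. -/
def IsCentralElt {L : Type u} [Lattice L] [BoundedOrder L] (z : L) : Prop :=
  ∃ (L₁ L₂ : Type u) (i₁ : Lattice L₁) (i₂ : Lattice L₂)
    (b₁ : BoundedOrder L₁) (b₂ : BoundedOrder L₂) (φ : L ≃o (L₁ × L₂)),
    φ z = (⊥, ⊤)

/-- `x` lies in the interval `[lo, hi]` and is a central element of that interval. -/
def IsCentralIn {G : Type u} [Lattice G] (x lo hi : G) : Prop :=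
  ∃ hmem : x ∈ Set.Icc lo hi,
    letI : Fact (lo ≤ hi) := ⟨hmem.1.trans hmem.2⟩
    IsCentralElt (⟨x, hmem⟩ : Set.Icc lo hi)

/-!
Let `Z` be the center of `[s⁻¹, 1]` and let `a ∈ Z` have complement `a'`. Right multiplication by
`a` carries `Z` onto the center of `[s⁻¹ * a, a]`. Cutting an element of the latter at `s⁻¹` gives
a central element of `[s⁻¹, a]` and one of `[s⁻¹ * a, s⁻¹]`; left multiplication by `s` moves the
second one to `[a, 1]`, and the two glue to an element of `Z`. This self-map of `Z` is injective,
and descending chains force `Z` to be finite, so some `c` is mapped to `a'`. That means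
`c * a = s⁻¹`, hence `s⁻¹` is central in `[s⁻¹ * a, a]`. A central element `b ≤ a` is then central
first in `[s⁻¹, a]` and so in `[s⁻¹ * a, a]`, and multiplying by `a⁻¹` on the right gives the claim.
-/

/-- `z` and `z'` are complementary central elements of the interval `[lo, hi]`. The two
inequalities are the self-dual form of the decomposition of `[lo, hi]` as a product of
`[lo, z]` and `[lo, z']`; for `x = lo` and `x = hi` they say that `z'` is a complement of `z`. -/
structure IsCentralPair {G : Type*} [Lattice G] (lo hi z z' : G) : Prop where
  left_mem : z ∈ Set.Icc lo hi
  right_mem : z' ∈ Set.Icc lo hi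
  le_sup_inf : ∀ x ∈ Set.Icc lo hi, x ≤ (x ⊓ z) ⊔ (x ⊓ z')
  inf_sup_le : ∀ x ∈ Set.Icc lo hi, (x ⊔ z) ⊓ (x ⊔ z') ≤ x

theorem isCentralPair_bot_top {G : Type*} [Lattice G] {lo hi : G} (h : lo ≤ hi) :
    IsCentralPair lo hi lo hi where
  left_mem := Set.left_mem_Icc.2 h
  right_mem := Set.right_mem_Icc.2 h
  le_sup_inf _ hx := le_sup_of_le_right (le_inf le_rfl hx.2)
  inf_sup_le _ hx := inf_le_left.trans (sup_le le_rfl hx.1)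

namespace IsCentralPair

variable {G : Type*} [Lattice G] {lo hi z z' : G}

theorem symm (h : IsCentralPair lo hi z z') : IsCentralPair lo hi z' z where
  left_mem := h.right_mem
  right_mem := h.left_mem
  le_sup_inf x hx := sup_comm (x ⊓ z) _ ▸ h.le_sup_inf x hx
  inf_sup_le x hx := inf_comm (x ⊔ z) _ ▸ h.inf_sup_le x hx

theorem map {H : Type*} [Lattice H] (h : IsCentralPair lo hi z z') (e : G ≃o H) :
    IsCentralPair (e lo) (e hi) (e z) (e z') where
  left_mem := ⟨e.monotone h.left_mem.1, e.monotone h.left_mem.2⟩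
  right_mem := ⟨e.monotone h.right_mem.1, e.monotone h.right_mem.2⟩
  le_sup_inf x hx := by
    have := e.monotone (h.le_sup_inf (e.symm x) ⟨e.le_symm_apply.2 hx.1, e.symm_apply_le.2 hx.2⟩)
    simpa only [e.map_sup, e.map_inf, e.apply_symm_apply] using this
  inf_sup_le x hx := by
    have := e.monotone (h.inf_sup_le (e.symm x) ⟨e.le_symm_apply.2 hx.1, e.symm_apply_le.2 hx.2⟩)
    simpa only [e.map_sup, e.map_inf, e.apply_symm_apply] using this

theorem le (h : IsCentralPair lo hi z z') : lo ≤ hi :=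
  h.left_mem.1.trans h.left_mem.2

theorem inf_eq (h : IsCentralPair lo hi z z') : z ⊓ z' = lo := by
  refine le_antisymm ?_ (le_inf h.left_mem.1 h.right_mem.1)
  exact (inf_le_inf le_sup_right le_sup_right).trans (h.inf_sup_le lo (Set.left_mem_Icc.2 h.le))

theorem sup_eq (h : IsCentralPair lo hi z z') : z ⊔ z' = hi := by
  refine le_antisymm (sup_le h.left_mem.2 h.right_mem.2) ?_
  exact (h.le_sup_inf hi (Set.right_mem_Icc.2 h.le)).trans (sup_le_sup inf_le_right inf_le_right)

theorem inf_sup_inf {x : G} (h : IsCentralPair lo hi z z') (hx : x ∈ Set.Icc lo hi) :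
    (x ⊓ z) ⊔ (x ⊓ z') = x :=
  le_antisymm (sup_le inf_le_left inf_le_left) (h.le_sup_inf x hx)

theorem sup_inf_of_le {p q : G} (h : IsCentralPair lo hi z z') (hp : p ∈ Set.Icc lo z)
    (hq : q ≤ z') : (p ⊔ q) ⊓ z = p := by
  refine le_antisymm ?_ (le_inf le_sup_left hp.2)
  calc (p ⊔ q) ⊓ z ≤ (p ⊔ z') ⊓ (p ⊔ z) := inf_le_inf (sup_le_sup_left hq p) le_sup_right
    _ = (p ⊔ z) ⊓ (p ⊔ z') := inf_comm _ _
    _ ≤ p := h.inf_sup_le p ⟨hp.1, hp.2.trans h.left_mem.2⟩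

theorem sup_inf_of_ge {q : G} (h : IsCentralPair lo hi z z') (hq : q ∈ Set.Icc z hi) :
    z ⊔ (q ⊓ z') = q := by
  simpa only [inf_eq_right.2 hq.1] using h.inf_sup_inf ⟨h.left_mem.1.trans hq.1, hq.2⟩

theorem inf_sup_right {x y : G} (h : IsCentralPair lo hi z z') (hx : x ∈ Set.Icc lo hi)
    (hy : y ∈ Set.Icc lo hi) : (x ⊔ y) ⊓ z = (x ⊓ z) ⊔ (y ⊓ z) := by
  refine le_antisymm ?_ (sup_le (inf_le_inf_right z le_sup_left) (inf_le_inf_right z le_sup_right))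
  have split : x ⊔ y ≤ ((x ⊓ z) ⊔ (y ⊓ z)) ⊔ z' :=
    sup_le
      ((h.le_sup_inf x hx).trans (sup_le_sup le_sup_left inf_le_right))
      ((h.le_sup_inf y hy).trans (sup_le_sup le_sup_right inf_le_right))
  calc (x ⊔ y) ⊓ z ≤ (((x ⊓ z) ⊔ (y ⊓ z)) ⊔ z') ⊓ z := inf_le_inf_right z split
    _ = (x ⊓ z) ⊔ (y ⊓ z) := h.sup_inf_of_le
        ⟨le_sup_of_le_left (le_inf hx.1 h.left_mem.1), sup_le inf_le_right inf_le_right⟩ le_rfl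

theorem eq_of_inf_eq_of_sup_eq {x y : G} (h : IsCentralPair lo hi z z') (hx : x ∈ Set.Icc lo hi)
    (hy : y ∈ Set.Icc lo hi) (hinf : z ⊓ y = x ⊓ y) (hsup : z ⊔ y = x ⊔ y) : z = x := by
  refine le_antisymm ?_ ?_
  · calc z = (x ⊔ y) ⊓ z := (inf_eq_right.2 (hsup ▸ le_sup_left)).symm
      _ = (x ⊓ z) ⊔ (y ⊓ z) := h.inf_sup_right hx hy
      _ ≤ x := sup_le inf_le_left (by rw [inf_comm, hinf]; exact inf_le_left)
  · have hxz' : x ⊓ z' ≤ y := by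
      calc x ⊓ z' ≤ (z ⊔ y) ⊓ z' := inf_le_inf_right z' (hsup ▸ le_sup_left)
        _ = (z ⊓ z') ⊔ (y ⊓ z') := h.symm.inf_sup_right h.left_mem hy
        _ ≤ y := sup_le (h.inf_eq ▸ hy.1) inf_le_left
    calc x ≤ (x ⊓ z) ⊔ (x ⊓ z') := h.le_sup_inf x hx
      _ ≤ z := sup_le inf_le_right
        ((le_inf inf_le_left hxz').trans (hinf ▸ inf_le_left))

theorem inf_right {c : G} (h : IsCentralPair lo hi z z') (hc : c ∈ Set.Icc lo hi) :
    IsCentralPair lo c (z ⊓ c) (z' ⊓ c) where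
  left_mem := ⟨le_inf h.left_mem.1 hc.1, inf_le_right⟩
  right_mem := ⟨le_inf h.right_mem.1 hc.1, inf_le_right⟩
  le_sup_inf x hx := by
    have hxc (w : G) : x ⊓ (w ⊓ c) = x ⊓ w := by
      rw [← inf_assoc, inf_eq_left.2 (inf_le_left.trans hx.2)]
    simpa only [hxc] using h.le_sup_inf x ⟨hx.1, hx.2.trans hc.2⟩
  inf_sup_le x hx :=
    (inf_le_inf (sup_le_sup_left inf_le_left x) (sup_le_sup_left inf_le_left x)).trans
      (h.inf_sup_le x ⟨hx.1, hx.2.trans hc.2⟩)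

theorem sup_right {c : G} (h : IsCentralPair lo hi z z') (hc : c ∈ Set.Icc lo hi) :
    IsCentralPair c hi (z ⊔ c) (z' ⊔ c) where
  left_mem := ⟨le_sup_right, sup_le h.left_mem.2 hc.2⟩
  right_mem := ⟨le_sup_right, sup_le h.right_mem.2 hc.2⟩
  le_sup_inf x hx :=
    (h.le_sup_inf x ⟨hc.1.trans hx.1, hx.2⟩).trans
      (sup_le_sup (inf_le_inf_left x le_sup_left) (inf_le_inf_left x le_sup_left))
  inf_sup_le x hx := by
    have hcx (w : G) : x ⊔ (w ⊔ c) = x ⊔ w := by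
      rw [← sup_assoc, sup_eq_left.2 (hx.1.trans le_sup_left)]
    simpa only [hcx] using h.inf_sup_le x ⟨hc.1.trans hx.1, hx.2⟩

theorem inf_complement {q q' : G} (h : IsCentralPair lo hi z z') (hq : IsCentralPair z hi q q') :
    IsCentralPair lo z' (q ⊓ z') (q' ⊓ z') := by
  have sup_mem {y : G} (hy : y ∈ Set.Icc lo z') : y ⊔ z ∈ Set.Icc z hi :=
    ⟨le_sup_right, sup_le (hy.2.trans h.right_mem.2) h.left_mem.2⟩
  have sup_inf {y : G} (hy : y ∈ Set.Icc lo z') : (y ⊔ z) ⊓ z' = y :=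
    h.symm.sup_inf_of_le hy le_rfl
  have inf_mem {y w : G} (hw : w ∈ Set.Icc z hi) :
      (y ⊔ z) ⊓ w ∈ Set.Icc lo hi :=
    ⟨h.left_mem.1.trans (le_inf le_sup_right hw.1), inf_le_right.trans hw.2⟩
  refine ⟨⟨le_inf (h.left_mem.1.trans hq.left_mem.1) h.right_mem.1, inf_le_right⟩,
    ⟨le_inf (h.left_mem.1.trans hq.right_mem.1) h.right_mem.1, inf_le_right⟩, ?_, ?_⟩
  · intro y hy
    have hyw (w : G) : ((y ⊔ z) ⊓ w) ⊓ z' = y ⊓ (w ⊓ z') := by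
      rw [inf_right_comm, sup_inf hy, inf_left_comm, inf_eq_left.2 hy.2, inf_comm]
    calc y = (((y ⊔ z) ⊓ q) ⊔ ((y ⊔ z) ⊓ q')) ⊓ z' := by
          rw [hq.inf_sup_inf (sup_mem hy), sup_inf hy]
      _ = (((y ⊔ z) ⊓ q) ⊓ z') ⊔ (((y ⊔ z) ⊓ q') ⊓ z') :=
          h.symm.inf_sup_right (inf_mem hq.left_mem) (inf_mem hq.right_mem)
      _ ≤ (y ⊓ (q ⊓ z')) ⊔ (y ⊓ (q' ⊓ z')) := by rw [hyw, hyw]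
  · intro y hy
    have hle (w : G) : y ⊔ (w ⊓ z') ≤ (y ⊔ z) ⊔ w := sup_le_sup le_sup_left inf_le_left
    calc (y ⊔ (q ⊓ z')) ⊓ (y ⊔ (q' ⊓ z'))
        ≤ (((y ⊔ z) ⊔ q) ⊓ ((y ⊔ z) ⊔ q')) ⊓ z' :=
          le_inf (inf_le_inf (hle q) (hle q')) (inf_le_left.trans (sup_le hy.2 inf_le_right))
      _ ≤ (y ⊔ z) ⊓ z' := inf_le_inf_right z' (hq.inf_sup_le _ (sup_mem hy))
      _ = y := sup_inf hy

theorem inf_sup_inf_le_of_factors {x p p' r r' : G} (h : IsCentralPair lo hi z z')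
    (hp : IsCentralPair lo z p p') (hr : r ∈ Set.Icc lo z') (hr' : r' ∈ Set.Icc lo z')
    (hx : x ∈ Set.Icc lo hi) : ((x ⊔ (p ⊔ r)) ⊓ (x ⊔ (p' ⊔ r'))) ⊓ z ≤ x := by
  have proj {w t : G} (hw : w ∈ Set.Icc lo z) (ht : t ∈ Set.Icc lo z') :
      (x ⊔ (w ⊔ t)) ⊓ z = (x ⊓ z) ⊔ w := by
    rw [h.inf_sup_right hx ⟨le_sup_of_le_left hw.1,
      sup_le (hw.2.trans h.left_mem.2) (ht.2.trans h.right_mem.2)⟩, h.sup_inf_of_le hw ht.2]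
  calc ((x ⊔ (p ⊔ r)) ⊓ (x ⊔ (p' ⊔ r'))) ⊓ z
      = ((x ⊓ z) ⊔ p) ⊓ ((x ⊓ z) ⊔ p') := by
        rw [inf_inf_distrib_right, proj hp.left_mem hr, proj hp.right_mem hr']
    _ ≤ x ⊓ z := hp.inf_sup_le _ ⟨le_inf hx.1 h.left_mem.1, inf_le_right⟩
    _ ≤ x := inf_le_left

theorem sup_of_factors {p p' r r' : G} (h : IsCentralPair lo hi z z')
    (hp : IsCentralPair lo z p p') (hr : IsCentralPair lo z' r r') :
    IsCentralPair lo hi (p ⊔ r) (p' ⊔ r') where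
  left_mem := ⟨le_sup_of_le_left hp.left_mem.1,
    sup_le (hp.left_mem.2.trans h.left_mem.2) (hr.left_mem.2.trans h.right_mem.2)⟩
  right_mem := ⟨le_sup_of_le_left hp.right_mem.1,
    sup_le (hp.right_mem.2.trans h.left_mem.2) (hr.right_mem.2.trans h.right_mem.2)⟩
  le_sup_inf x hx := by
    have hz := hp.le_sup_inf (x ⊓ z) ⟨le_inf hx.1 h.left_mem.1, inf_le_right⟩
    have hz' := hr.le_sup_inf (x ⊓ z') ⟨le_inf hx.1 h.right_mem.1, inf_le_right⟩
    refine (h.le_sup_inf x hx).trans (sup_le (hz.trans ?_) (hz'.trans ?_))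
    · exact sup_le_sup (inf_le_inf inf_le_left le_sup_left) (inf_le_inf inf_le_left le_sup_left)
    · exact sup_le_sup (inf_le_inf inf_le_left le_sup_right) (inf_le_inf inf_le_left le_sup_right)
  inf_sup_le x hx := by
    set y := (x ⊔ (p ⊔ r)) ⊓ (x ⊔ (p' ⊔ r')) with hy
    have y_mem : y ∈ Set.Icc lo hi :=
      ⟨le_inf (le_sup_of_le_left hx.1) (le_sup_of_le_left hx.1),
        inf_le_left.trans (sup_le hx.2 (sup_le (hp.left_mem.2.trans h.left_mem.2)
          (hr.left_mem.2.trans h.right_mem.2)))⟩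
    have hyz : y ⊓ z ≤ x := h.inf_sup_inf_le_of_factors hp hr.left_mem hr.right_mem hx
    have hyz' : y ⊓ z' ≤ x := by
      rw [hy, sup_comm p, sup_comm p']
      exact h.symm.inf_sup_inf_le_of_factors hr hp.left_mem hp.right_mem hx
    exact (h.le_sup_inf y y_mem).trans (sup_le hyz hyz')

end IsCentralPair

theorem isCentralElt_iff {L : Type u} [Lattice L] [BoundedOrder L] {z : L} :
    IsCentralElt z ↔ ∃ z', IsCentralPair ⊥ ⊤ z z' := by
  constructor
  · rintro ⟨L₁, L₂, _, _, _, _, φ, hφ⟩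
    have hφ' : φ (φ.symm (⊤, ⊥)) = (⊤, ⊥) := φ.apply_symm_apply _
    refine ⟨φ.symm (⊤, ⊥), ⟨bot_le, le_top⟩, ⟨bot_le, le_top⟩, fun x _ => ?_, fun x _ => ?_⟩
    · rw [← φ.le_iff_le, φ.map_sup, φ.map_inf, φ.map_inf, hφ, hφ']
      exact ⟨by simp, by simp⟩
    · rw [← φ.le_iff_le, φ.map_inf, φ.map_sup, φ.map_sup, hφ, hφ']
      exact ⟨by simp, by simp⟩
  · rintro ⟨z', h⟩
    have decomp (x : L) : (x ⊓ z) ⊔ (x ⊓ z') = x := h.inf_sup_inf ⟨bot_le, le_top⟩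
    let φ : L ≃o Set.Iic z' × Set.Iic z :=
      { toFun := fun x => (⟨x ⊓ z', inf_le_right⟩, ⟨x ⊓ z, inf_le_right⟩)
        invFun := fun w => w.2 ⊔ w.1
        left_inv := decomp
        right_inv := fun w => Prod.ext
          (Subtype.ext (by
            simpa only [sup_comm] using h.symm.sup_inf_of_le ⟨bot_le, w.1.2⟩ w.2.2))
          (Subtype.ext (h.sup_inf_of_le ⟨bot_le, w.2.2⟩ w.1.2))
        map_rel_iff' := by
          intro x y
          refine ⟨fun hxy => ?_, fun hxy => ⟨inf_le_inf_right z' hxy, inf_le_inf_right z hxy⟩⟩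
          rw [← decomp x, ← decomp y]
          exact sup_le_sup hxy.2 hxy.1 }
    exact ⟨Set.Iic z', Set.Iic z, inferInstance, inferInstance, inferInstance, inferInstance, φ,
      Prod.ext (Subtype.ext h.inf_eq) (Subtype.ext (inf_idem z))⟩

theorem isCentralIn_iff {G : Type u} [Lattice G] {lo hi z : G} :
    IsCentralIn z lo hi ↔ ∃ z', IsCentralPair lo hi z z' := by
  constructor
  · rintro ⟨hz, hcentral⟩
    have : Fact (lo ≤ hi) := ⟨hz.1.trans hz.2⟩
    obtain ⟨z', h⟩ := isCentralElt_iff.1 hcentral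
    exact ⟨z', hz, z'.2, fun x hx => h.le_sup_inf ⟨x, hx⟩ ⟨bot_le, le_top⟩,
      fun x hx => h.inf_sup_le ⟨x, hx⟩ ⟨bot_le, le_top⟩⟩
  · rintro ⟨z', h⟩
    have : Fact (lo ≤ hi) := ⟨h.le⟩
    exact ⟨h.left_mem, isCentralElt_iff.2 ⟨⟨z', h.right_mem⟩, ⟨bot_le, le_top⟩, ⟨bot_le, le_top⟩,
      fun x _ => h.le_sup_inf x x.2, fun x _ => h.inf_sup_le x x.2⟩⟩

theorem IsCentralPair.isCentralIn {G : Type u} [Lattice G] {lo hi z z' : G}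
    (h : IsCentralPair lo hi z z') : IsCentralIn z lo hi :=
  isCentralIn_iff.2 ⟨z', h⟩

theorem IsCentralPair.isCentralIn_sup_inf {G : Type u} [Lattice G] {lo hi z z' p q : G}
    (h : IsCentralPair lo hi z z') (hp : IsCentralIn p lo z) (hq : IsCentralIn q z hi) :
    IsCentralIn (p ⊔ (q ⊓ z')) lo hi := by
  obtain ⟨p', hp⟩ := isCentralIn_iff.1 hp
  obtain ⟨q', hq⟩ := isCentralIn_iff.1 hq
  exact (h.sup_of_factors hp (h.inf_complement hq)).isCentralIn

namespace IsCentralIn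

variable {G : Type u} [Lattice G] {lo hi z w c : G}

theorem mem_Icc (h : IsCentralIn z lo hi) : z ∈ Set.Icc lo hi := h.1

theorem map {H : Type u} [Lattice H] (h : IsCentralIn z lo hi) (e : G ≃o H) :
    IsCentralIn (e z) (e lo) (e hi) := by
  obtain ⟨z', h⟩ := isCentralIn_iff.1 h
  exact (h.map e).isCentralIn

theorem inf_right (h : IsCentralIn z lo hi) (hc : c ∈ Set.Icc lo hi) :
    IsCentralIn (z ⊓ c) lo c := by
  obtain ⟨z', h⟩ := isCentralIn_iff.1 h
  exact (h.inf_right hc).isCentralIn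

theorem sup_right (h : IsCentralIn z lo hi) (hc : c ∈ Set.Icc lo hi) :
    IsCentralIn (z ⊔ c) c hi := by
  obtain ⟨z', h⟩ := isCentralIn_iff.1 h
  exact (h.sup_right hc).isCentralIn

theorem trans_bot (hw : IsCentralIn w lo z) (hz : IsCentralIn z lo hi) : IsCentralIn w lo hi := by
  obtain ⟨z', hz⟩ := isCentralIn_iff.1 hz
  have := hz.isCentralIn_sup_inf hw (isCentralPair_bot_top hz.left_mem.2).isCentralIn
  rwa [hz.inf_eq, sup_eq_left.2 hw.mem_Icc.1] at this

theorem trans_top (hw : IsCentralIn w z hi) (hz : IsCentralIn z lo hi) : IsCentralIn w lo hi := by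
  obtain ⟨z', hz⟩ := isCentralIn_iff.1 hz
  have := hz.isCentralIn_sup_inf (isCentralPair_bot_top hz.left_mem.1).symm.isCentralIn hw
  rwa [hz.sup_inf_of_ge hw.mem_Icc] at this

theorem inf (hz : IsCentralIn z lo hi) (hw : IsCentralIn w lo hi) : IsCentralIn (z ⊓ w) lo hi :=
  (hz.inf_right hw.mem_Icc).trans_bot hw

end IsCentralIn

section Finiteness

variable {G : Type u} [Lattice G]

theorem IsCentralPair.finite_setOf_isCentralIn {lo hi z z' : G} (h : IsCentralPair lo hi z z')
    (hz : {x | IsCentralIn x lo z}.Finite) (hz' : {x | IsCentralIn x lo z'}.Finite) :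
    {x | IsCentralIn x lo hi}.Finite := by
  refine Set.Finite.of_injOn (f := fun x => (x ⊓ z, x ⊓ z')) ?_ ?_ (hz.prod hz')
  · exact fun x hx => ⟨hx.inf_right h.left_mem, hx.inf_right h.right_mem⟩
  · intro x hx y hy hxy
    obtain ⟨hxz, hxz'⟩ := Prod.mk.inj hxy
    rw [← h.inf_sup_inf hx.mem_Icc, hxz, hxz', h.inf_sup_inf hy.mem_Icc]

theorem finite_setOf_isCentralIn_of_isWF {lo hi : G} (hwf : (Set.Icc lo hi).IsWF) :
    {x | IsCentralIn x lo hi}.Finite := by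
  obtain hempty | ⟨x, hx⟩ := Set.eq_empty_or_nonempty {x | IsCentralIn x lo hi}
  · exact hempty ▸ Set.finite_empty
  refine hwf.induction (Set.right_mem_Icc.2 (hx.mem_Icc.1.trans hx.mem_Icc.2))
    (P := fun c => {x | IsCentralIn x lo c}.Finite) fun c hc ih => ?_
  by_cases htrivial : ∀ z, IsCentralIn z lo c → z = lo ∨ z = c
  · exact (Set.toFinite {lo, c}).subset htrivial
  · push Not at htrivial
    obtain ⟨z, hz, hzlo, hzc⟩ := htrivial
    obtain ⟨z', h⟩ := isCentralIn_iff.1 hz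
    have hz'c : z' ≠ c := by
      rintro rfl
      exact hzlo (by rw [← h.inf_eq, inf_eq_left.2 h.left_mem.2])
    exact h.finite_setOf_isCentralIn
      (ih z ⟨h.left_mem.1, h.left_mem.2.trans hc.2⟩ (h.left_mem.2.lt_of_ne hzc))
      (ih z' ⟨h.right_mem.1, h.right_mem.2.trans hc.2⟩ (h.right_mem.2.lt_of_ne hz'c))

theorem IsLatticeNoetherian.isWF_Icc (hG : IsLatticeNoetherian G) (lo hi : G) :
    (Set.Icc lo hi).IsWF := by
  rw [Set.isWF_iff_no_descending_seq]
  intro f hf hmem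
  obtain ⟨N, hN⟩ := hG.2 f hf.antitone ⟨lo, fun n => (hmem n).1⟩
  exact (hf N.lt_succ_self).ne (hN _ N.le_succ)

end Finiteness

section RightLatticeGroup

variable {G : Type u} [Lattice G] [Group G] {s : G}

/-- Left multiplication by a normal element, as an order isomorphism. -/
def IsNormal.mulLeftIso (hs : IsNormal s) : G ≃o G where
  toEquiv := Equiv.mulLeft s
  map_rel_iff' {x y} := by
    change s * x ≤ s * y ↔ x ≤ y
    rw [← inf_eq_left, ← (hs x y).1, mul_right_inj, inf_eq_left]

theorem IsNormal.inv_mul_le_inv (hs : IsNormal s) {a : G} (ha : a ≤ 1) : s⁻¹ * a ≤ s⁻¹ := by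
  rw [← hs.mulLeftIso.le_iff_le]
  change s * (s⁻¹ * a) ≤ s * s⁻¹
  rwa [mul_inv_cancel_left, mul_inv_cancel]

/-- The self-map of the center of `[s⁻¹, 1]` attached to a central element `a` with complement
`a'`: translate `c` into `[s⁻¹ * a, a]`, cut at `s⁻¹`, move the lower part to `[a, 1]`, and glue
the two parts along `[s⁻¹, a]` and `[a, 1]`. -/
def centerShift (s a a' c : G) : G := (c * a ⊔ s⁻¹) ⊔ ((s * (c * a ⊓ s⁻¹)) ⊓ a')

variable [MulRightMono G] {a a' b c : G}

theorem IsCentralIn.mul_right {lo hi z : G} (h : IsCentralIn z lo hi) (g : G) :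
    IsCentralIn (z * g) (lo * g) (hi * g) :=
  h.map (OrderIso.mulRight g)

theorem IsCentralIn.mul_sup_inv (hs : IsNormal s) (ha : a ∈ Set.Icc s⁻¹ 1)
    (hc : IsCentralIn c s⁻¹ 1) : IsCentralIn (c * a ⊔ s⁻¹) s⁻¹ a := by
  have := hc.mul_right a
  rw [one_mul] at this
  exact this.sup_right ⟨hs.inv_mul_le_inv ha.2, ha.1⟩

theorem IsCentralIn.mul_mul_inf_inv (hs : IsNormal s) (ha : a ∈ Set.Icc s⁻¹ 1)
    (hc : IsCentralIn c s⁻¹ 1) : IsCentralIn (s * (c * a ⊓ s⁻¹)) a 1 := by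
  have hca := hc.mul_right a
  rw [one_mul] at hca
  have := (hca.inf_right ⟨hs.inv_mul_le_inv ha.2, ha.1⟩).map hs.mulLeftIso
  change IsCentralIn (s * (c * a ⊓ s⁻¹)) (s * (s⁻¹ * a)) (s * s⁻¹) at this
  rwa [mul_inv_cancel_left, mul_inv_cancel] at this

theorem isCentralIn_centerShift (hs : IsNormal s) (ha : IsCentralPair s⁻¹ 1 a a')
    (hc : IsCentralIn c s⁻¹ 1) : IsCentralIn (centerShift s a a' c) s⁻¹ 1 :=
  ha.isCentralIn_sup_inf (hc.mul_sup_inv hs ha.left_mem) (hc.mul_mul_inf_inv hs ha.left_mem)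

theorem centerShift_inf (hs : IsNormal s) (ha : IsCentralPair s⁻¹ 1 a a')
    (hc : IsCentralIn c s⁻¹ 1) : centerShift s a a' c ⊓ a = c * a ⊔ s⁻¹ :=
  ha.sup_inf_of_le (hc.mul_sup_inv hs ha.left_mem).mem_Icc inf_le_right

theorem sup_centerShift (hs : IsNormal s) (ha : IsCentralPair s⁻¹ 1 a a')
    (hc : IsCentralIn c s⁻¹ 1) : a ⊔ centerShift s a a' c = s * (c * a ⊓ s⁻¹) := by
  rw [centerShift, ← sup_assoc, sup_eq_left.2 (hc.mul_sup_inv hs ha.left_mem).mem_Icc.2,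
    ha.sup_inf_of_ge (hc.mul_mul_inf_inv hs ha.left_mem).mem_Icc]

theorem centerShift_injOn (hs : IsNormal s) (ha : IsCentralPair s⁻¹ 1 a a') :
    Set.InjOn (centerShift s a a') {c | IsCentralIn c s⁻¹ 1} := by
  intro c hc d hd hcd
  have hsup : c * a ⊔ s⁻¹ = d * a ⊔ s⁻¹ := by
    rw [← centerShift_inf hs ha hc, hcd, centerShift_inf hs ha hd]
  have hinf : c * a ⊓ s⁻¹ = d * a ⊓ s⁻¹ := by
    rw [← mul_right_inj s, ← sup_centerShift hs ha hc, hcd, sup_centerShift hs ha hd]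
  have hca := hc.mul_right a
  have hda := hd.mul_right a
  rw [one_mul] at hca hda
  obtain ⟨_, hpair⟩ := isCentralIn_iff.1 hca
  exact mul_right_cancel (hpair.eq_of_inf_eq_of_sup_eq hda.mem_Icc
    ⟨hs.inv_mul_le_inv ha.left_mem.2, ha.left_mem.1⟩ hinf hsup)

theorem mul_eq_inv_of_centerShift_eq (hs : IsNormal s) (ha : IsCentralPair s⁻¹ 1 a a')
    (hc : IsCentralIn c s⁻¹ 1) (hca' : centerShift s a a' c = a') : c * a = s⁻¹ := by
  refine le_antisymm ?_ ?_
  · rw [← sup_eq_right, ← centerShift_inf hs ha hc, hca', inf_comm, ha.inf_eq]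
  · rw [← inf_eq_right, ← mul_right_inj s, ← sup_centerShift hs ha hc, hca', mul_inv_cancel,
      ha.sup_eq]

theorem centerShift_surjOn (hfin : {z | IsCentralIn z s⁻¹ 1}.Finite) (hs : IsNormal s)
    (ha : IsCentralPair s⁻¹ 1 a a') :
    Set.SurjOn (centerShift s a a') {c | IsCentralIn c s⁻¹ 1} {c | IsCentralIn c s⁻¹ 1} := by
  intro d hd
  obtain ⟨c, hc, hcd⟩ := Set.surj_on_of_inj_on_of_ncard_le (fun c _ => centerShift s a a' c)
    (fun _ hc => isCentralIn_centerShift hs ha hc)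
    (fun _ _ hc hc' heq => centerShift_injOn hs ha hc hc' heq) le_rfl hfin d hd
  exact ⟨c, hc, hcd.symm⟩

theorem IsCentralIn.isCentralIn_inv (hfin : {z | IsCentralIn z s⁻¹ 1}.Finite) (hs : IsNormal s)
    (ha : IsCentralIn a s⁻¹ 1) : IsCentralIn s⁻¹ (s⁻¹ * a) a := by
  obtain ⟨a', ha⟩ := isCentralIn_iff.1 ha
  obtain ⟨c, hc : IsCentralIn c s⁻¹ 1, hca'⟩ := centerShift_surjOn hfin hs ha ha.symm.isCentralIn
  have := hc.mul_right a
  rwa [mul_eq_inv_of_centerShift_eq hs ha hc hca', one_mul] at this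

theorem IsCentralIn.mul_inv_of_le (hfin : {z | IsCentralIn z s⁻¹ 1}.Finite) (hs : IsNormal s)
    (ha : IsCentralIn a s⁻¹ 1) (hb : IsCentralIn b s⁻¹ 1) (hba : b ≤ a) :
    IsCentralIn (b * a⁻¹) s⁻¹ 1 := by
  have hb_below : IsCentralIn b s⁻¹ a := inf_eq_left.2 hba ▸ hb.inf_right ha.mem_Icc
  have hb_wide : IsCentralIn b (s⁻¹ * a) a := hb_below.trans_top (ha.isCentralIn_inv hfin hs)
  simpa only [mul_inv_cancel_right, mul_inv_cancel] using hb_wide.mul_right a⁻¹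

theorem center_closed_under_arrow_general (hfin : {z | IsCentralIn z s⁻¹ 1}.Finite)
    (hs : IsNormal s) (ha : IsCentralIn a s⁻¹ 1) (hb : IsCentralIn b s⁻¹ 1) :
    (b ≤ a → IsCentralIn (b * a⁻¹) s⁻¹ 1) ∧ IsCentralIn ((a ⊓ b) * a⁻¹) s⁻¹ 1 :=
  ⟨ha.mul_inv_of_le hfin hs hb, ha.mul_inv_of_le hfin hs (ha.inf hb) inf_le_left⟩

end RightLatticeGroup

/-- In a modular noetherian right ℓ-group with `s⁻¹ = ⋀ X(G⁻)` a strong order unit, if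
`a, b` are central in the strong order interval `[s⁻¹, 1]` and `b ≤ a`, then `b * a⁻¹`
is central as well; consequently the center is closed under `a → b = (a ⊓ b) a⁻¹`. -/
theorem center_closed_under_arrow {G : Type u} [Lattice G] [Group G]
    [CovariantClass G G (Function.swap (· * ·)) (· ≤ ·)] [IsModularLattice G]
    (hG : IsLatticeNoetherian G) (s : G)
    (hglb : IsGLB {x : G | x ⋖ 1} s⁻¹) (hs : IsStrongOrderUnit s)
    (a b : G) (ha : IsCentralIn a s⁻¹ 1) (hb : IsCentralIn b s⁻¹ 1) :
    (b ≤ a → IsCentralIn (b * a⁻¹) s⁻¹ 1) ∧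
    IsCentralIn ((a ⊓ b) * a⁻¹) s⁻¹ 1 :=
  center_closed_under_arrow_general
    (finite_setOf_isCentralIn_of_isWF (hG.isWF_Icc s⁻¹ 1)) hs.2.1 ha hb
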